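/- For every nonempty finite sequence L of positive real numbers, there exists a single valid partition of L that simultaneously (i) has last-block total equal to y_n, the minimum possible last-block total over all valid partitions of L, and (ii) has the maximum possible number of blocks over all valid partitions of L. -/

import Mathlib

/-- `pSum L i` is `x_i`: the sum of the first `i` elements of `L` (so `pSum L 0 = 0`). -/
def pSum (L : List ℝ) (i : ℕ) : ℝ := (L.take i).sum

/-- A valid partition of `L`: a partition of `L` into nonempty consecutive blocks
whose totals are non-decreasing from left to right. -/
def ValidPartition (L : List ℝ) (P : List (List ℝ)) : Prop :=
  P.flatten = L ∧ (∀ B ∈ P, B ≠ []) ∧ List.Chain' (· ≤ ·) (P.map List.sum)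

/-- The total of the last block of a partition (`0` for the empty partition). -/
def lastTotal (P : List (List ℝ)) : ℝ := (P.map List.sum).getLastD 0

/-- `wrapLen L` is the wrapping length `y_{|L|}`: the minimum, over all valid
partitions of `L`, of the total of the last block (with `wrapLen [] = 0`,
realized by the empty partition). -/
noncomputable def wrapLen (L : List ℝ) : ℝ :=
  sInf {t | ∃ P, ValidPartition L P ∧ lastTotal P = t}

/-!
Close the partition with the shortest block `B` that ends any valid partition of `L`, and
partition the remaining prefix `A` optimally by recursion: the last total on `A` is then at most
that of the partition `B` came from, so `B` may be appended. Every other valid partition of `L`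
ends in a block `C ++ B`, so its last total is at least that of `B`; merging `C` into the block
before it gives a valid partition of `A` with at least as many blocks as the other partition has
before its last one. Hence a single choice is optimal for both criteria.
-/

theorem lastTotal_concat (Q : List (List ℝ)) (B : List ℝ) : lastTotal (Q ++ [B]) = B.sum := by
  simp [lastTotal]

theorem isChain_map_sum_concat_iff {Q : List (List ℝ)} {B : List ℝ} :
    ((Q ++ [B]).map List.sum).IsChain (· ≤ ·) ↔
      (Q.map List.sum).IsChain (· ≤ ·) ∧ (Q ≠ [] → lastTotal Q ≤ B.sum) := by
  rcases List.eq_nil_or_concat' Q with rfl | ⟨R, D, rfl⟩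
  · simp
  · rw [lastTotal_concat, List.map_append (l₁ := R ++ [D]), List.isChain_append]
    simp

theorem validPartition_concat_iff {A B : List ℝ} {Q : List (List ℝ)} :
    ValidPartition (A ++ B) (Q ++ [B]) ↔
      ValidPartition A Q ∧ B ≠ [] ∧ (Q ≠ [] → lastTotal Q ≤ B.sum) := by
  have flatten_iff : (Q ++ [B]).flatten = A ++ B ↔ Q.flatten = A := by simp
  have ne_nil_iff : (∀ D ∈ Q ++ [B], D ≠ []) ↔ (∀ D ∈ Q, D ≠ []) ∧ B ≠ [] := by
    simp only [List.forall_mem_append, List.forall_mem_singleton]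
  refine (and_congr flatten_iff (and_congr ne_nil_iff isChain_map_sum_concat_iff)).trans ?_
  exact ⟨fun ⟨hflatten, ⟨hQ, hBne⟩, hchain, hle⟩ => ⟨⟨hflatten, hQ, hchain⟩, hBne, hle⟩,
    fun ⟨⟨hflatten, hQ, hchain⟩, hBne, hle⟩ => ⟨hflatten, ⟨hQ, hBne⟩, hchain, hle⟩⟩

theorem validPartition_nil : ValidPartition [] [] :=
  ⟨rfl, List.forall_mem_nil _, List.IsChain.nil⟩

theorem validPartition_singleton {L : List ℝ} (hL : L ≠ []) : ValidPartition L [L] :=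
  ⟨List.flatten_singleton, List.forall_mem_singleton.2 hL, List.IsChain.singleton _⟩

theorem exists_validPartition (L : List ℝ) : ∃ P, ValidPartition L P := by
  rcases eq_or_ne L [] with rfl | hL
  · exact ⟨[], validPartition_nil⟩
  · exact ⟨[L], validPartition_singleton hL⟩

namespace ValidPartition

variable {L A C : List ℝ} {P R : List (List ℝ)}

theorem eq_nil (hP : ValidPartition [] P) : P = [] :=
  List.eq_nil_iff_forall_not_mem.2 fun B hB =>
    hP.2.1 B hB (List.flatten_eq_nil_iff.1 hP.1 B hB)

theorem exists_eq_concat (hP : ValidPartition L P) (hL : L ≠ []) :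
    ∃ A B Q, L = A ++ B ∧ P = Q ++ [B] := by
  rcases List.eq_nil_or_concat' P with rfl | ⟨Q, B, rfl⟩
  · exact absurd hP.1.symm hL
  · exact ⟨Q.flatten, B, Q, by simp [← hP.1], rfl⟩

theorem exists_append_length_le (hR : ValidPartition A R) (hC : 0 ≤ C.sum) :
    ∃ P, ValidPartition (A ++ C) P ∧ R.length ≤ P.length := by
  rcases eq_or_ne A [] with rfl | hne
  · obtain ⟨P, hP⟩ := exists_validPartition C
    exact ⟨P, hP, by simp [hR.eq_nil]⟩
  obtain ⟨A, D, Q, rfl, rfl⟩ := hR.exists_eq_concat hne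
  have hDC : D.sum ≤ (D ++ C).sum := by
    simpa only [List.sum_append] using le_add_of_nonneg_right hC
  obtain ⟨hQ, hDne, hQD⟩ := validPartition_concat_iff.1 hR
  refine ⟨Q ++ [D ++ C], ?_, by simp⟩
  rw [List.append_assoc, validPartition_concat_iff]
  exact ⟨hQ, List.append_ne_nil_of_left_ne_nil hDne C, fun hQne => (hQD hQne).trans hDC⟩

end ValidPartition

/-- `B` is the last block of some valid partition of `L`. -/
def IsLastBlock (L B : List ℝ) : Prop :=
  ∃ Q, ValidPartition L (Q ++ [B])

theorem IsLastBlock.ne_nil {L B : List ℝ} (hB : IsLastBlock L B) : B ≠ [] :=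
  let ⟨_, hQ⟩ := hB
  hQ.2.1 B (by simp)

theorem IsLastBlock.suffix {L B : List ℝ} (hB : IsLastBlock L B) : B <:+ L :=
  let ⟨Q, hQ⟩ := hB
  ⟨Q.flatten, by simpa using hQ.1⟩

theorem exists_isLastBlock {L : List ℝ} (hL : L ≠ []) : ∃ B, IsLastBlock L B := by
  obtain ⟨P, hP⟩ := exists_validPartition L
  obtain ⟨-, B, Q, -, rfl⟩ := hP.exists_eq_concat hL
  exact ⟨B, Q, hP⟩

theorem exists_isLastBlock_forall_suffix {L : List ℝ} (hL : L ≠ []) :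
    ∃ B, IsLastBlock L B ∧ ∀ D, IsLastBlock L D → B <:+ D := by
  obtain ⟨B, hB, hmin⟩ :=
    exists_minimalFor_of_wellFoundedLT (IsLastBlock L) List.length (exists_isLastBlock hL)
  refine ⟨B, hB, fun D hD => List.suffix_of_suffix_length_le hB.suffix hD.suffix ?_⟩
  exact (le_total B.length D.length).elim id (hmin hD)

/-- A valid partition of `L` that minimises the total of the last block and at the same time
maximises the number of blocks. -/
structure IsOptimalPartition (L : List ℝ) (P : List (List ℝ)) : Prop where
  valid : ValidPartition L P
  lastTotal_le : ∀ {P'}, ValidPartition L P' → lastTotal P ≤ lastTotal P'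
  length_le : ∀ {P'}, ValidPartition L P' → P'.length ≤ P.length

theorem isOptimalPartition_nil : IsOptimalPartition [] [] where
  valid := validPartition_nil
  lastTotal_le hP := by rw [hP.eq_nil]
  length_le hP := by rw [hP.eq_nil]

namespace IsOptimalPartition

variable {L A B : List ℝ} {P S : List (List ℝ)}

theorem concat (hS : IsOptimalPartition A S) (hnonneg : ∀ l ∈ A ++ B, 0 ≤ l)
    (hB : IsLastBlock (A ++ B) B) (hsuffix : ∀ D, IsLastBlock (A ++ B) D → B <:+ D) :
    IsOptimalPartition (A ++ B) (S ++ [B]) := by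
  obtain ⟨hA, hBnonneg⟩ := List.forall_mem_append.1 hnonneg
  have hvalid : ValidPartition (A ++ B) (S ++ [B]) := by
    obtain ⟨Q, hQ⟩ := hB
    obtain ⟨hQA, hBne, hQB⟩ := validPartition_concat_iff.1 hQ
    have hQsum : lastTotal Q ≤ B.sum := by
      rcases eq_or_ne Q [] with rfl | hQne
      · simpa [lastTotal] using List.sum_nonneg hBnonneg
      · exact hQB hQne
    exact validPartition_concat_iff.2
      ⟨hS.valid, hBne, fun _ => (hS.lastTotal_le hQA).trans hQsum⟩
  have hcompare {P' : List (List ℝ)} (hP' : ValidPartition (A ++ B) P') :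
      lastTotal (S ++ [B]) ≤ lastTotal P' ∧ P'.length ≤ (S ++ [B]).length := by
    obtain ⟨A', D, R, hAD, rfl⟩ :=
      hP'.exists_eq_concat (List.append_ne_nil_of_right_ne_nil A hB.ne_nil)
    obtain ⟨C, rfl⟩ := hsuffix D ⟨R, hP'⟩
    obtain rfl : A = A' ++ C := by simpa [← List.append_assoc] using hAD
    have hC : 0 ≤ C.sum := List.sum_nonneg (List.forall_mem_append.1 hA).2
    have hsum : B.sum ≤ (C ++ B).sum := by
      simpa only [List.sum_append] using le_add_of_nonneg_left hC
    rw [hAD, validPartition_concat_iff] at hP'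
    obtain ⟨P₁, hP₁, hlength⟩ := hP'.1.exists_append_length_le hC
    refine ⟨by simpa only [lastTotal_concat] using hsum, ?_⟩
    simpa using hlength.trans (hS.length_le hP₁)
  exact ⟨hvalid, fun hP' => (hcompare hP').1, fun hP' => (hcompare hP').2⟩

theorem lastTotal_eq_wrapLen (hP : IsOptimalPartition L P) : lastTotal P = wrapLen L := by
  have hleast : IsLeast {t | ∃ P', ValidPartition L P' ∧ lastTotal P' = t} (lastTotal P) :=
    ⟨⟨P, hP.valid, rfl⟩, fun _ ⟨_, hP', ht⟩ => ht ▸ hP.lastTotal_le hP'⟩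
  exact hleast.csInf_eq.symm

end IsOptimalPartition

theorem exists_isOptimalPartition (L : List ℝ) (hL : ∀ l ∈ L, 0 ≤ l) :
    ∃ P, IsOptimalPartition L P := by
  rcases eq_or_ne L [] with rfl | hne
  · exact ⟨[], isOptimalPartition_nil⟩
  obtain ⟨B, hB, hsuffix⟩ := exists_isLastBlock_forall_suffix hne
  obtain ⟨A, rfl⟩ := hB.suffix
  obtain ⟨S, hS⟩ := exists_isOptimalPartition A (List.forall_mem_append.1 hL).1
  exact ⟨S ++ [B], hS.concat hL hB hsuffix⟩
termination_by L.length
decreasing_by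
  subst_vars
  simpa using List.length_pos_iff.2 hB.ne_nil

theorem stmt_8_general (L : List ℝ) (hL : ∀ l ∈ L, 0 ≤ l) :
    ∃ P, ValidPartition L P ∧ lastTotal P = wrapLen L ∧
      ∀ P', ValidPartition L P' → P'.length ≤ P.length := by
  obtain ⟨P, hP⟩ := exists_isOptimalPartition L hL
  exact ⟨P, hP.valid, hP.lastTotal_eq_wrapLen, fun _ => hP.length_le⟩

/-- For every nonempty finite sequence `L` of positive reals, there
is a single valid partition of `L` that simultaneously (i) has last-block total
equal to `y_n`, the minimum possible last-block total over all valid partitions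
of `L`, and (ii) has the maximum possible number of blocks over all valid
partitions of `L`. -/
theorem stmt_8 (L : List ℝ) (hL : ∀ l ∈ L, 0 < l) (hne : L ≠ []) :
    ∃ P, ValidPartition L P ∧ lastTotal P = wrapLen L ∧
      ∀ P', ValidPartition L P' → P'.length ≤ P.length :=
  stmt_8_general L fun l hl => (hL l hl).le
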